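/- Let Σ = {a,b,c} and let A be the architecture with Procs = {p1,p2}, Stacks = Bags = ∅, DS = Queues = {c1,c2}, Writer(c1) = Reader(c2) = p1 and Writer(c2) = Reader(c1) = p2. There exists an MSO(A,Σ) sentence φ such that for every CPDS S over (A,Σ), L(S) ≠ L(φ). -/

import Mathlib

/-! ### Architectures and concurrent behaviors with matching (CBMs) -/

/-- The three kinds of data structures. -/
inductive DSKind : Type
  | stack
  | queue
  | bag
deriving DecidableEq

/-- An architecture: a finite set of processes, a finite set of data structures
(each a stack, queue, or bag), with writer and reader processes; stacks are
written and read by the same process. -/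
structure Architecture where
  Procs : Type
  DS : Type
  procsFintype : Fintype Procs
  dsFintype : Fintype DS
  procsDecEq : DecidableEq Procs
  dsDecEq : DecidableEq DS
  kind : DS → DSKind
  Writer : DS → Procs
  Reader : DS → Procs
  stack_wr : ∀ d, kind d = DSKind.stack → Writer d = Reader d

attribute [instance] Architecture.procsFintype Architecture.dsFintype
  Architecture.procsDecEq Architecture.dsDecEq

/-- Potential events: a process together with a (1-based) position. -/
abbrev Architecture.Event (A : Architecture) : Type := A.Procs × ℕ

/-- The data of a CBM: one word per process and one matching relation per
data structure (on potential events). -/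
structure PreCBM (A : Architecture) (Alph : Type) where
  word : A.Procs → List Alph
  mrel : A.DS → A.Event → A.Event → Prop

namespace PreCBM

variable {A : Architecture} {Alph : Type}

/-- `(p,i)` is an event iff `1 ≤ i ≤ |w_p|`. -/
def isEvent (M : PreCBM A Alph) (e : A.Event) : Prop :=
  1 ≤ e.2 ∧ e.2 ≤ (M.word e.1).length

/-- The set of events of `M`. -/
def events (M : PreCBM A Alph) : Set A.Event := {e | M.isEvent e}

/-- The label of event `(p,i)` is the `i`-th letter of `w_p`. -/
def label (M : PreCBM A Alph) (e : A.Event) : Option Alph :=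
  (M.word e.1)[e.2 - 1]?

/-- Process-successor relation `(p,i) → (p,i+1)`. -/
def procSucc (M : PreCBM A Alph) (e f : A.Event) : Prop :=
  M.isEvent e ∧ M.isEvent f ∧ f.1 = e.1 ∧ f.2 = e.2 + 1

/-- `e ▷ f` for some data structure. -/
def mat (M : PreCBM A Alph) (e f : A.Event) : Prop := ∃ d, M.mrel d e f

def step (M : PreCBM A Alph) (e f : A.Event) : Prop := M.procSucc e f ∨ M.mat e f

/-- The causal order `< = (→ ∪ ▷)⁺`. -/
def lt (M : PreCBM A Alph) : A.Event → A.Event → Prop := Relation.TransGen M.step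

/-- An event is internal if it is not the endpoint of any matching edge. -/
def isInternal (M : PreCBM A Alph) (e : A.Event) : Prop :=
  ¬ ∃ d f, M.mrel d e f ∨ M.mrel d f e

/-- The CBM axioms. -/
structure IsCBM (M : PreCBM A Alph) : Prop where
  mrel_valid : ∀ d e f, M.mrel d e f →
    M.isEvent e ∧ M.isEvent f ∧ e.1 = A.Writer d ∧ f.1 = A.Reader d
  disjoint : ∀ d d' e f e' f', M.mrel d e f → M.mrel d' e' f' →
    ¬ (d = d' ∧ e = e' ∧ f = f') → e ≠ e' ∧ e ≠ f' ∧ f ≠ e' ∧ f ≠ f'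
  irrefl : ∀ e, ¬ M.lt e e
  lifo : ∀ d, A.kind d = DSKind.stack → ∀ e₁ f₁ e₂ f₂,
    M.mrel d e₁ f₁ → M.mrel d e₂ f₂ → M.lt e₁ e₂ → M.lt e₂ f₁ → M.lt f₂ f₁
  fifo : ∀ d, A.kind d = DSKind.queue → ∀ e₁ f₁ e₂ f₂,
    M.mrel d e₁ f₁ → M.mrel d e₂ f₂ → M.lt e₁ e₂ → M.lt f₁ f₂

end PreCBM

/-- Concurrent behaviors with matching over `(A, Alph)`. -/
def CBM (A : Architecture) (Alph : Type) : Type := {M : PreCBM A Alph // M.IsCBM}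
/-! ### Systems of concurrent processes with data structures (CPDS) -/

/-- A CPDS over an architecture `A` and alphabet `Alph`. -/
structure CPDS (A : Architecture) (Alph : Type) where
  Locs : Type
  Val : Type
  locsFintype : Fintype Locs
  valFintype : Fintype Val
  locsNonempty : Nonempty Locs
  valNonempty : Nonempty Val
  internal : A.Procs → Locs → Alph → Locs → Prop
  write : A.Procs → Locs → Alph → A.DS → Val → Locs → Prop
  read : A.Procs → Locs → Alph → A.DS → Val → Locs → Prop
  write_writer : ∀ p ℓ a d v ℓ', write p ℓ a d v ℓ' → A.Writer d = p
  read_reader : ∀ p ℓ a d v ℓ', read p ℓ a d v ℓ' → A.Reader d = p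
  init : Locs
  finals : Set (A.Procs → Locs)

namespace CPDS

variable {A : Architecture} {Alph : Type}

/-- `ρ⁻(e)`: location before event `e` (`init` if `e` is minimal on its process). -/
def prevLoc (S : CPDS A Alph) (ρ : A.Event → S.Locs) (e : A.Event) : S.Locs :=
  if e.2 ≤ 1 then S.init else ρ (e.1, e.2 - 1)

/-- `ρ` is a run of `S` on `M` (graph semantics). -/
def IsRun (S : CPDS A Alph) (M : PreCBM A Alph) (ρ : A.Event → S.Locs) : Prop :=
  (∀ e, M.isEvent e → M.isInternal e →
    ∃ a, M.label e = some a ∧ S.internal e.1 (S.prevLoc ρ e) a (ρ e)) ∧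
  (∀ d e f, M.mrel d e f → ∃ v a b,
    M.label e = some a ∧ M.label f = some b ∧
    S.write e.1 (S.prevLoc ρ e) a d v (ρ e) ∧
    S.read f.1 (S.prevLoc ρ f) b d v (ρ f))

/-- Location of the last event of process `p` (`init` if it has no event). -/
def lastLoc (S : CPDS A Alph) (M : PreCBM A Alph) (ρ : A.Event → S.Locs)
    (p : A.Procs) : S.Locs :=
  if (M.word p).length = 0 then S.init else ρ (p, (M.word p).length)

/-- `S` accepts `M`: some run reaching a global final location tuple. -/
def AcceptsPre (S : CPDS A Alph) (M : PreCBM A Alph) : Prop :=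
  ∃ ρ : A.Event → S.Locs, S.IsRun M ρ ∧ (fun p => S.lastLoc M ρ p) ∈ S.finals

/-- The graph-semantics language `L(S) ⊆ CBM(A,Alph)`. -/
def lang (S : CPDS A Alph) : Set (CBM A Alph) := {M | S.AcceptsPre M.1}

end CPDS
/-! ### Monadic second-order logic over vertex- and edge-labeled structures -/

/-- MSO formulas over structures with vertex labels `Vl` and binary relations
indexed by `El`.  First-order variables and set variables are indexed by `ℕ`. -/
inductive GMSO (Vl El : Type) : Type
  | lab (a : Vl) (x : ℕ)
  | edge (γ : El) (x y : ℕ)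
  | eq (x y : ℕ)
  | mem (x X : ℕ)
  | or (φ ψ : GMSO Vl El)
  | not (φ : GMSO Vl El)
  | exFO (x : ℕ) (φ : GMSO Vl El)
  | exSO (X : ℕ) (φ : GMSO Vl El)

namespace GMSO

variable {Vl El : Type} {V : Type}

/-- Satisfaction of an MSO formula in a structure with domain `dom`, labeling
relation `lab` and edge relations `edge`, under valuations `ν` (first-order,
partial) and `μ` (second-order). -/
def Sat (dom : Set V) (lab : V → Vl → Prop) (edge : El → V → V → Prop) :
    (ℕ → Option V) → (ℕ → Set V) → GMSO Vl El → Prop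
  | ν, _, .lab a x => ∃ v, ν x = some v ∧ v ∈ dom ∧ lab v a
  | ν, _, .edge γ x y => ∃ u v, ν x = some u ∧ ν y = some v ∧ edge γ u v
  | ν, _, .eq x y => ∃ v, ν x = some v ∧ ν y = some v
  | ν, μ, .mem x X => ∃ v, ν x = some v ∧ v ∈ μ X
  | ν, μ, .or φ ψ => Sat dom lab edge ν μ φ ∨ Sat dom lab edge ν μ ψ
  | ν, μ, .not φ => ¬ Sat dom lab edge ν μ φ
  | ν, μ, .exFO x φ => ∃ v ∈ dom, Sat dom lab edge (Function.update ν x (some v)) μ φ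
  | ν, μ, .exSO X φ => ∃ E : Set V, E ⊆ dom ∧ Sat dom lab edge ν (Function.update μ X E) φ

/-- Free first-order variables. -/
def freeFO : GMSO Vl El → Set ℕ
  | .lab _ x => {x}
  | .edge _ x y => {x, y}
  | .eq x y => {x, y}
  | .mem x _ => {x}
  | .or φ ψ => freeFO φ ∪ freeFO ψ
  | .not φ => freeFO φ
  | .exFO x φ => freeFO φ \ {x}
  | .exSO _ φ => freeFO φ

/-- Free second-order variables. -/
def freeSO : GMSO Vl El → Set ℕ
  | .lab _ _ => ∅
  | .edge _ _ _ => ∅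
  | .eq _ _ => ∅
  | .mem _ X => {X}
  | .or φ ψ => freeSO φ ∪ freeSO ψ
  | .not φ => freeSO φ
  | .exFO _ φ => freeSO φ
  | .exSO X φ => freeSO φ \ {X}

/-- A sentence is a formula without free variables. -/
def Closed (φ : GMSO Vl El) : Prop := freeFO φ = ∅ ∧ freeSO φ = ∅

/-- Satisfaction of a sentence (valuations are irrelevant for sentences). -/
def Models (dom : Set V) (lab : V → Vl → Prop) (edge : El → V → V → Prop)
    (φ : GMSO Vl El) : Prop :=
  Sat dom lab edge (fun _ => none) (fun _ => ∅) φ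

/-- First-order formulas: no second-order quantification. -/
def FirstOrder : GMSO Vl El → Prop
  | .or φ ψ => FirstOrder φ ∧ FirstOrder ψ
  | .not φ => FirstOrder φ
  | .exFO _ φ => FirstOrder φ
  | .exSO _ _ => False
  | _ => True

/-- EMSO formulas: a block of existential second-order quantifiers followed by a
first-order formula. -/
inductive IsEMSO : GMSO Vl El → Prop
  | fo {φ : GMSO Vl El} : FirstOrder φ → IsEMSO φ
  | ex {X : ℕ} {φ : GMSO Vl El} : IsEMSO φ → IsEMSO (.exSO X φ)

end GMSO
/-! ### MSO over CBMs -/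

namespace PreCBM

variable {A : Architecture} {Alph : Type}

/-- Vertex-label relation of a CBM: `a(x)` (letter) and `p(x)` (process). -/
def gmsoLab (M : PreCBM A Alph) (e : A.Event) : Alph ⊕ A.Procs → Prop := fun q =>
  match q with
  | Sum.inl a => M.label e = some a
  | Sum.inr p => e.1 = p

/-- Edge relations of a CBM: `x → y` (`none`) and `x ▷^d y` (`some d`). -/
def gmsoEdge (M : PreCBM A Alph) : Option A.DS → A.Event → A.Event → Prop := fun γ e f =>
  match γ with
  | none => M.procSucc e f
  | some d => M.mrel d e f

/-- Satisfaction of an `MSO(A,Alph)` sentence in the CBM `M`. -/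
def MsoSat (M : PreCBM A Alph) (φ : GMSO (Alph ⊕ A.Procs) (Option A.DS)) : Prop :=
  GMSO.Models M.events M.gmsoLab M.gmsoEdge φ

end PreCBM

/-- `L(φ) = {M ∈ CBM(A,Alph) | M ⊨ φ}`. -/
def msoLang (A : Architecture) (Alph : Type)
    (φ : GMSO (Alph ⊕ A.Procs) (Option A.DS)) : Set (CBM A Alph) :=
  {M | M.1.MsoSat φ}
/-! ### The two-process, two-queue architecture -/

/-- The architecture with processes `p1 = false`, `p2 = true`, queues
`c1 = false` (from `p1` to `p2`) and `c2 = true` (from `p2` to `p1`). -/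
def archQQ : Architecture where
  Procs := Bool
  DS := Bool
  procsFintype := inferInstance
  dsFintype := inferInstance
  procsDecEq := inferInstance
  dsDecEq := inferInstance
  kind := fun _ => DSKind.queue
  Writer := fun d => d
  Reader := fun d => !d
  stack_wr := fun _ h => DSKind.noConfusion h

namespace MsoNot

open GMSO

abbrev F := GMSO (Fin 3 ⊕ archQQ.Procs) (Option archQQ.DS)

def fand (φ ψ : F) : F := .not (.or (.not φ) (.not ψ))

theorem sat_fand {V : Type} (dom : Set V) (lab : V → (Fin 3 ⊕ archQQ.Procs) → Prop)
    (edge : Option archQQ.DS → V → V → Prop) (ν : ℕ → Option V) (μ : ℕ → Set V) (φ ψ : F) :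
    Sat dom lab edge ν μ (fand φ ψ) ↔ (Sat dom lab edge ν μ φ ∧ Sat dom lab edge ν μ ψ) := by
  simp [fand, Sat]

def e1 (x y : ℕ) : F := .edge (some (false : Bool)) x y
def e2 (x y : ℕ) : F := .edge (some (true : Bool)) x y
def es (x y : ℕ) : F := .edge none x y

def fC : F := .exFO 4 (.exFO 5 (.exFO 6
  (fand (e1 2 4) (fand (es 4 5) (fand (e2 5 6) (es 6 3))))))

def fD : F := .exFO 4 (.exFO 5 (.exFO 6 (.exFO 7 (.exFO 8
  (fand (e1 2 4) (fand (es 4 5) (fand (e2 5 6) (fand (es 6 7) (fand (es 7 8) (es 8 3))))))))))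

def fReach (R : F) : F := .not (.exSO 0 (fand (.mem 0 0) (fand (.not (.mem 1 0))
  (.not (.exFO 2 (.exFO 3 (fand (.mem 2 0) (fand (.not (.mem 3 0)) R))))))))

def phi : F := .not (.exFO 0 (.exFO 1 (fand (.lab (Sum.inl 0) 0) (fand (.lab (Sum.inl 1) 1)
  (fand (fReach fC) (fReach fD))))))

theorem phi_closed : GMSO.Closed phi := by
  constructor
  · ext a
    simp only [phi, fReach, fC, fD, fand, e1, e2, es, freeFO, Set.mem_sdiff, Set.mem_union,
      Set.mem_singleton_iff, Set.mem_insert_iff, Set.mem_empty_iff_false]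
    grind
  · ext a
    simp only [phi, fReach, fC, fD, fand, e1, e2, es, freeSO, Set.mem_sdiff, Set.mem_union,
      Set.mem_singleton_iff, Set.mem_insert_iff, Set.mem_empty_iff_false]
    tauto

abbrev Ev := archQQ.Event

def RC (M : PreCBM archQQ (Fin 3)) (u v : Ev) : Prop :=
  ∃ a ∈ M.events, ∃ b ∈ M.events, ∃ c ∈ M.events,
    M.mrel (false : Bool) u a ∧ M.procSucc a b ∧ M.mrel (true : Bool) b c ∧ M.procSucc c v

def RD (M : PreCBM archQQ (Fin 3)) (u v : Ev) : Prop :=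
  ∃ a ∈ M.events, ∃ b ∈ M.events, ∃ c ∈ M.events, ∃ d ∈ M.events, ∃ e ∈ M.events,
    M.mrel (false : Bool) u a ∧ M.procSucc a b ∧ M.mrel (true : Bool) b c ∧ M.procSucc c d ∧
    M.procSucc d e ∧ M.procSucc e v

def Reach (M : PreCBM archQQ (Fin 3)) (R : Ev → Ev → Prop) (x y : Ev) : Prop :=
  ∀ X : Set Ev, X ⊆ M.events → x ∈ X →
    (∀ u ∈ M.events, ∀ v ∈ M.events, u ∈ X → R u v → v ∈ X) → y ∈ X

theorem sat_fC (M : PreCBM archQQ (Fin 3)) (ν : ℕ → Option Ev) (μ : ℕ → Set Ev) (u v : Ev)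
    (hu : ν 2 = some u) (hv : ν 3 = some v) :
    Sat M.events M.gmsoLab M.gmsoEdge ν μ fC ↔ RC M u v := by
  simp [fC, sat_fand, Sat, e1, e2, es, Function.update, hu, hv, RC, PreCBM.gmsoEdge]

theorem sat_fD (M : PreCBM archQQ (Fin 3)) (ν : ℕ → Option Ev) (μ : ℕ → Set Ev) (u v : Ev)
    (hu : ν 2 = some u) (hv : ν 3 = some v) :
    Sat M.events M.gmsoLab M.gmsoEdge ν μ fD ↔ RD M u v := by
  simp [fD, sat_fand, Sat, e1, e2, es, Function.update, hu, hv, RD, PreCBM.gmsoEdge]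

theorem sat_fReach (M : PreCBM archQQ (Fin 3)) (Rf : F) (R : Ev → Ev → Prop)
    (h : ∀ (ν : ℕ → Option Ev) (μ : ℕ → Set Ev) (u v : Ev), ν 2 = some u → ν 3 = some v →
      (Sat M.events M.gmsoLab M.gmsoEdge ν μ Rf ↔ R u v))
    (ν : ℕ → Option Ev) (μ : ℕ → Set Ev) (x y : Ev)
    (hx : ν 0 = some x) (hy : ν 1 = some y) :
    Sat M.events M.gmsoLab M.gmsoEdge ν μ (fReach Rf) ↔ Reach M R x y := by
  have h' : ∀ (ν : ℕ → Option Ev) (μ : ℕ → Set Ev) (u v : Ev),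
      (Sat M.events M.gmsoLab M.gmsoEdge
        (Function.update (Function.update ν 2 (some u)) 3 (some v)) μ Rf ↔ R u v) := by
    intro ν μ u v
    apply h <;> simp [Function.update]
  simp only [fReach, Sat, sat_fand, h', Reach]
  simp [Function.update, hx, hy]
  constructor
  · intro H X hX hxX hcl
    by_contra hyX
    obtain ⟨a, i, ha, b, j, hb, h1, h2, h3⟩ := H X hX hxX hyX
    exact h2 (hcl a i ha b j hb h1 h3)
  · intro H X hX hxX hyX
    by_contra hno
    push Not at hno
    apply hyX
    apply H X hX hxX
    intro a i ha b j hb h1 h3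
    by_contra h2
    exact hno a i ha b j hb h1 h2 h3

theorem sat_phi (M : PreCBM archQQ (Fin 3)) :
    M.MsoSat phi ↔ ¬ ∃ x ∈ M.events, ∃ y ∈ M.events, M.label x = some 0 ∧ M.label y = some 1 ∧
      Reach M (RC M) x y ∧ Reach M (RD M) x y := by
  have hC : ∀ (ν : ℕ → Option Ev) (μ : ℕ → Set Ev) (u v : Ev),
      (Sat M.events M.gmsoLab M.gmsoEdge
        (Function.update (Function.update ν 0 (some u)) 1 (some v)) μ (fReach fC)
          ↔ Reach M (RC M) u v) := by
    intro ν μ u v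
    apply sat_fReach M fC _ (sat_fC M) <;> simp [Function.update]
  have hD : ∀ (ν : ℕ → Option Ev) (μ : ℕ → Set Ev) (u v : Ev),
      (Sat M.events M.gmsoLab M.gmsoEdge
        (Function.update (Function.update ν 0 (some u)) 1 (some v)) μ (fReach fD)
          ↔ Reach M (RD M) u v) := by
    intro ν μ u v
    apply sat_fReach M fD _ (sat_fD M) <;> simp [Function.update]
  simp only [PreCBM.MsoSat, Models, phi, Sat, sat_fand, hC, hD]
  apply not_congr
  constructor
  · rintro ⟨x, hx, y, hy, h1, h2, h3⟩
    simp [Function.update, PreCBM.gmsoLab] at h1 h2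
    exact ⟨x, hx, y, hy, h1.2, h2.2, h3⟩
  · rintro ⟨x, hx, y, hy, h1, h2, h3⟩
    refine ⟨x, hx, y, hy, ?_, ?_, h3⟩
    · simp [Function.update, PreCBM.gmsoLab, hx, h1]
    · simp [Function.update, PreCBM.gmsoLab, hy, h2]

/-! the family -/

def mr (n L : ℕ) (d : Bool) (e f : Bool × ℕ) : Prop :=
  e.1 = d ∧ f.1 = (!d) ∧ e.2 % 2 = 0 ∧ (1 ≤ e.2 ∧ e.2 ≤ L) ∧ (1 ≤ f.2 ∧ f.2 ≤ L) ∧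
      f.2 + 1 = e.2 + (if d = true then 2 * n else 0)

theorem mr_disj (n L : ℕ) (d d' : Bool) (e f e' f' : Bool × ℕ) (h : mr n L d e f)
    (h' : mr n L d' e' f') (hne : ¬ (d = d' ∧ e = e' ∧ f = f')) :
    e ≠ e' ∧ e ≠ f' ∧ f ≠ e' ∧ f ≠ f' := by
  obtain ⟨p, i⟩ := e
  obtain ⟨q, j⟩ := f
  obtain ⟨p', i'⟩ := e'
  obtain ⟨q', j'⟩ := f'
  obtain ⟨h1, h2, h3, h4, h5, h6⟩ := h
  obtain ⟨g1, g2, g3, g4, g5, g6⟩ := h'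
  simp only at h1 h2 h3 h4 h5 h6 g1 g2 g3 g4 g5 g6
  subst h1 h2 g1 g2
  cases p <;> cases p' <;> simp [Prod.ext_iff] at * <;> omega

def Mk (n L : ℕ) (w : ℕ → Fin 3) : PreCBM archQQ (Fin 3) where
  word := fun (p : Bool) => (List.range L).map (fun i => if p = true then 2 else w (i+1))
  mrel := mr n L

theorem mk_isEvent (n L w) (e : Ev) : (Mk n L w).isEvent e ↔ 1 ≤ e.2 ∧ e.2 ≤ L := by
  simp [PreCBM.isEvent, Mk]

theorem mk_label (n L w) (i : ℕ) (h1 : 1 ≤ i) (h2 : i ≤ L) (p : Bool) :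
    (Mk n L w).label ((p, i) : Bool × ℕ) = some (if p = true then 2 else w i) := by
  have : i - 1 < L := by omega
  have h3 : i - 1 + 1 = i := by omega
  simp [PreCBM.label, Mk, this, h3]

theorem mk_ev (n L w) (p : Bool) (i : ℕ) (h1 : 1 ≤ i) (h2 : i ≤ L) :
    (Mk n L w).isEvent ((p, i) : Bool × ℕ) := (mk_isEvent n L w _).2 ⟨h1, h2⟩

theorem mk_ps (n L w) (p : Bool) (i j : ℕ) (h1 : 1 ≤ i) (h2 : j ≤ L) (h : j = i + 1) :
    (Mk n L w).procSucc ((p, i) : Bool × ℕ) ((p, j) : Bool × ℕ) :=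
  ⟨mk_ev n L w p i h1 (by omega), mk_ev n L w p j (by omega) h2, rfl, h⟩

theorem mk_mr (n L w) (d : Bool) (i j : ℕ) (h0 : i % 2 = 0) (h1 : 1 ≤ i) (h2 : i ≤ L)
    (h3 : 1 ≤ j) (h4 : j ≤ L) (h : j + 1 = i + (if d = true then 2 * n else 0)) :
    (Mk n L w).mrel d ((d, i) : Bool × ℕ) ((!d, j) : Bool × ℕ) :=
  ⟨rfl, rfl, h0, ⟨h1, h2⟩, ⟨h3, h4⟩, h⟩

def rank (e : Bool × ℕ) : ℕ := 2 * e.2 + if e.1 = true then 3 else 0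

theorem lt_rank (n L w) (hn : 2 ≤ n) (e f : Bool × ℕ) (h : (Mk n L w).lt e f) :
    rank e < rank f := by
  have hs : ∀ e f : Bool × ℕ, (Mk n L w).step e f → rank e < rank f := by
    rintro ⟨p, i⟩ ⟨q, j⟩ (⟨_, _, h1, h2⟩ | ⟨d, h1, h2, h3, h4, h5, h6⟩)
    · simp only at h1 h2
      subst h1
      simp only [rank]; omega
    · simp only at h1 h2 h3 h4 h5 h6
      subst h1 h2
      cases p <;> simp [rank] at * <;> omega
  induction h with
  | single h => exact hs _ _ h
  | tail _ h ih => exact ih.trans (hs _ _ h)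

theorem lt_of_idx (n L w) (p : Bool) (i j : ℕ) (h1 : 1 ≤ i) (h : i < j) (h2 : j ≤ L) :
    (Mk n L w).lt ((p, i) : Bool × ℕ) ((p, j) : Bool × ℕ) := by
  induction j, h using Nat.le_induction with
  | base => exact Relation.TransGen.single (Or.inl (mk_ps n L w p _ _ h1 h2 rfl))
  | succ k hk ih =>
    exact Relation.TransGen.tail (ih (by omega))
      (Or.inl (mk_ps n L w p _ _ (by omega) h2 rfl))

theorem mk_isCBM (n L w) (hn : 2 ≤ n) : (Mk n L w).IsCBM where
  mrel_valid := by
    rintro d e f ⟨h1, h2, h3, h4, h5, h6⟩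
    exact ⟨(mk_isEvent ..).2 h4, (mk_isEvent ..).2 h5, h1, h2⟩
  disjoint := fun d d' e f e' f' h h' hne => mr_disj n L d d' e f e' f' h h' hne
  irrefl := by
    intro e h
    exact lt_irrefl _ (lt_rank n L w hn e e h)
  lifo := by
    intro d h; cases h
  fifo := by
    rintro (d : Bool) _ ⟨(p : Bool), i⟩ ⟨(q : Bool), j⟩ ⟨(p' : Bool), i'⟩
      ⟨(q' : Bool), j'⟩ ⟨h1, h2, h3, h4, h5, h6⟩ ⟨g1, g2, g3, g4, g5, g6⟩ hlt
    have := lt_rank n L w hn _ _ hlt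
    simp only at h1 h2 h3 h4 h5 h6 g1 g2 g3 g4 g5 g6
    subst h1 h2 g1 g2
    simp only [rank] at this
    exact lt_of_idx n L w _ _ _ h5.1 (by omega) g5.2

theorem RC_elim (n L w) (u v : Bool × ℕ) (h : RC (Mk n L w) u v) :
    v.1 = false ∧ v.2 = u.2 + 2 * n := by
  obtain ⟨a, _, b, _, c, _, ⟨_, h2, h3, _, _, h4⟩, ⟨_, _, h5, h6⟩,
    ⟨h7, h8, _, _, _, h9⟩, ⟨_, _, h10, h11⟩⟩ := h
  simp at h4 h9 h8
  refine ⟨by rw [h10, h8], by omega⟩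

theorem RD_elim (n L w) (u v : Bool × ℕ) (h : RD (Mk n L w) u v) :
    v.1 = false ∧ v.2 = u.2 + 2 * (n + 1) := by
  obtain ⟨a, _, b, _, c, _, d, _, e, _, ⟨_, h2, h3, _, _, h4⟩, ⟨_, _, h5, h6⟩,
    ⟨h7, h8, _, _, _, h9⟩, ⟨_, _, h10, h11⟩, ⟨_, _, h12, h13⟩, ⟨_, _, h14, h15⟩⟩ := h
  simp at h4 h9 h8
  refine ⟨by rw [h14, h12, h10, h8], by omega⟩

theorem RC_intro (n L w) (hn : 2 ≤ n) (i : ℕ) (h1 : 1 ≤ i) (h0 : i % 2 = 0)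
    (h2 : i + 2 * n ≤ L) :
    RC (Mk n L w) ((false, i) : Bool × ℕ) ((false, i + 2 * n) : Bool × ℕ) := by
  exact ⟨((true, i - 1) : Bool × ℕ), mk_ev n L w _ _ (by omega) (by omega),
    ((true, i) : Bool × ℕ), mk_ev n L w _ _ (by omega) (by omega),
    ((false, i + 2 * n - 1) : Bool × ℕ), mk_ev n L w _ _ (by omega) (by omega),
    mk_mr n L w false _ _ h0 (by omega) (by omega) (by omega) (by omega) (by simp; omega),
    mk_ps n L w _ _ _ (by omega) (by omega) (by omega),
    mk_mr n L w true _ _ h0 (by omega) (by omega) (by omega) (by omega) (by simp; omega),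
    mk_ps n L w _ _ _ (by omega) (by omega) (by omega)⟩

theorem RD_intro (n L w) (hn : 2 ≤ n) (i : ℕ) (h1 : 1 ≤ i) (h0 : i % 2 = 0)
    (h2 : i + 2 * (n + 1) ≤ L) :
    RD (Mk n L w) ((false, i) : Bool × ℕ) ((false, i + 2 * (n + 1)) : Bool × ℕ) := by
  exact ⟨((true, i - 1) : Bool × ℕ), mk_ev n L w _ _ (by omega) (by omega),
    ((true, i) : Bool × ℕ), mk_ev n L w _ _ (by omega) (by omega),
    ((false, i + 2 * n - 1) : Bool × ℕ), mk_ev n L w _ _ (by omega) (by omega),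
    ((false, i + 2 * n) : Bool × ℕ), mk_ev n L w _ _ (by omega) (by omega),
    ((false, i + 2 * n + 1) : Bool × ℕ), mk_ev n L w _ _ (by omega) (by omega),
    mk_mr n L w false _ _ h0 (by omega) (by omega) (by omega) (by omega) (by simp; omega),
    mk_ps n L w _ _ _ (by omega) (by omega) (by omega),
    mk_mr n L w true _ _ h0 (by omega) (by omega) (by omega) (by omega) (by simp; omega),
    mk_ps n L w _ _ _ (by omega) (by omega) (by omega),
    mk_ps n L w _ _ _ (by omega) (by omega) (by omega),
    mk_ps n L w _ _ _ (by omega) (by omega) (by omega)⟩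

theorem reach_mod (n L w) (R : Ev → Ev → Prop) (c : ℕ)
    (hR : ∀ u v : Bool × ℕ, R u v → v.1 = false ∧ v.2 = u.2 + c)
    (x y : Bool × ℕ) (hx : x ∈ (Mk n L w).events) (hx1 : x.1 = false)
    (h : Reach (Mk n L w) R x y) : y.2 ≡ x.2 [MOD c] := by
  have := h {e | e ∈ (Mk n L w).events ∧ e.1 = false ∧ e.2 ≡ x.2 [MOD c]} (fun e he => he.1)
    ⟨hx, hx1, rfl⟩ (by
      rintro u _ v hv ⟨_, _, h3⟩ hr
      obtain ⟨h4, h5⟩ := hR u v hr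
      refine ⟨hv, h4, ?_⟩
      rw [h5]
      have : u.2 + c ≡ u.2 [MOD c] := by simp [Nat.ModEq]
      exact this.trans h3)
  exact this.2.2

theorem reach_intro (n L w) (R : Ev → Ev → Prop) (c : ℕ) (hc : c % 2 = 0)
    (hR : ∀ i, 1 ≤ i → i % 2 = 0 → i + c ≤ L →
      R ((false, i) : Bool × ℕ) ((false, i + c) : Bool × ℕ))
    (i : ℕ) (h1 : 1 ≤ i) (h0 : i % 2 = 0) (j : ℕ) (h2 : i + c * j ≤ L) :
    Reach (Mk n L w) R ((false, i) : Bool × ℕ) ((false, i + c * j) : Bool × ℕ) := by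
  intro X hX hx hcl
  induction j with
  | zero => simpa using hx
  | succ j ih =>
    have e : c * (j + 1) = c * j + c := by ring
    rw [e] at h2 ⊢
    have ih := ih (by omega)
    have hm : (c * j) % 2 = 0 := by simp [Nat.mul_mod, hc]
    rw [← Nat.add_assoc]
    exact hcl _ (hX ih) _ (mk_ev n L w _ _ (by omega) (by omega)) ih
      (hR _ (by omega) (by omega) (by omega))

def bit (b : Bool) : Fin 3 := if b = true then 1 else 0

def wd (P : ℕ) (u : ℕ → Bool) (i : ℕ) : Fin 3 := bit (u (i / 2 % P))

def mix (P : ℕ) (w w' : ℕ → Fin 3) (i : ℕ) : Fin 3 := if i ≤ 2 * P then w i else w' i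

theorem mem_phi (n L : ℕ) (u : ℕ → Bool) :
    (Mk n L (wd (n * (n + 1)) u)).MsoSat phi := by
  rw [sat_phi]
  rintro ⟨⟨(p : Bool), i⟩, hx, ⟨(q : Bool), j⟩, hy, h1, h2, h3, h4⟩
  have hx' := (mk_isEvent ..).1 hx
  have hy' := (mk_isEvent ..).1 hy
  replace h1 := (mk_label _ _ _ i hx'.1 hx'.2 p).symm.trans h1
  replace h2 := (mk_label _ _ _ j hy'.1 hy'.2 q).symm.trans h2
  cases p with
  | true => simp at h1
  | false =>
  cases q with
  | true => simp at h2
  | false =>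
  have m1 := reach_mod n L _ _ (2 * n) (RC_elim n L _) _ _ hx rfl h3
  have m2 := reach_mod n L _ _ (2 * (n + 1)) (RD_elim n L _) _ _ hx rfl h4
  simp only at m1 m2
  have par : j % 2 = i % 2 := m1.of_mul_right n
  have hi := Nat.div_add_mod i 2
  have hj := Nat.div_add_mod j 2
  have key : ∀ c, j ≡ i [MOD 2 * c] → j / 2 ≡ i / 2 [MOD c] := by
    intro c hc
    rw [← hi, ← hj, par] at hc
    have := Nat.ModEq.add_right_cancel' _ hc
    exact Nat.ModEq.mul_left_cancel' (by norm_num) this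
  have k : j / 2 ≡ i / 2 [MOD n * (n + 1)] :=
    (Nat.modEq_and_modEq_iff_modEq_mul (by simp)).1 ⟨key _ m1, key _ m2⟩
  have k' : j / 2 % (n * (n + 1)) = i / 2 % (n * (n + 1)) := k
  simp only [wd, k'] at h1 h2
  simp at h1 h2
  rw [h1] at h2
  simp at h2

theorem not_mem_phi (n : ℕ) (hn : 2 ≤ n) (u v : ℕ → Bool) (r : ℕ) (hr : r < n * (n + 1))
    (hu : u r = false) (hv : v r = true) :
    ¬ (Mk n (4 * (n * (n + 1))) (mix (n * (n + 1)) (wd (n * (n + 1)) u)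
      (wd (n * (n + 1)) v))).MsoSat phi := by
  rw [sat_phi, not_not]
  have hC : 2 * n * (n + 1) = 2 * (n * (n + 1)) := by ring
  have hD : 2 * (n + 1) * n = 2 * (n * (n + 1)) := by ring
  generalize hP : n * (n + 1) = P at *
  obtain ⟨m, hm1, hm2, hm3⟩ : ∃ m, 1 ≤ m ∧ m ≤ P ∧ m % P = r := by
    by_cases h : r = 0
    · exact ⟨P, by omega, le_rfl, by simp [h]⟩
    · exact ⟨r, by omega, by omega, Nat.mod_eq_of_lt hr⟩
  refine ⟨((false, 2 * m) : Bool × ℕ), ?_, ((false, 2 * m + 2 * P) : Bool × ℕ), ?_, ?_, ?_,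
    ?_, ?_⟩
  · exact mk_ev _ _ _ _ _ (by omega) (by omega)
  · exact mk_ev _ _ _ _ _ (by omega) (by omega)
  · rw [mk_label _ _ _ _ (by omega) (by omega)]
    have : 2 * m ≤ 2 * P := by omega
    simp [mix, this, wd, hm2, hm3, hu, bit]
  · rw [mk_label _ _ _ _ (by omega) (by omega)]
    have h1 : ¬ (2 * m + 2 * P ≤ 2 * P) := by omega
    have h2 : (2 * m + 2 * P) / 2 = m + P := by omega
    simp only [mix, h1, wd, h2, Nat.add_mod_right, hm3, hv, bit]
    simp
  · have := reach_intro n (4 * P) (mix P (wd P u) (wd P v)) _ (2 * n) (by omega)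
      (fun i h1 h0 h2 => RC_intro n (4 * P) (mix P (wd P u) (wd P v)) hn i h1 h0 h2)
      (2 * m) (by omega) (by omega) (n + 1) (by omega)
    rwa [hC] at this
  · have := reach_intro n (4 * P) (mix P (wd P u) (wd P v)) _ (2 * (n + 1)) (by omega)
      (fun i h1 h0 h2 => RD_intro n (4 * P) (mix P (wd P u) (wd P v)) hn i h1 h0 h2)
      (2 * m) (by omega) (by omega) n (by omega)
    rwa [hD] at this

/-! runs -/

def Good (S : CPDS archQQ (Fin 3)) (M : PreCBM archQQ (Fin 3)) (ρ : Bool × ℕ → S.Locs)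
    (val : Bool → Bool × ℕ → Bool × ℕ → S.Val) : Prop :=
  (∀ e : Bool × ℕ, M.isEvent e → M.isInternal e →
    ∃ a, M.label e = some a ∧ S.internal e.1 (S.prevLoc ρ e) a (ρ e)) ∧
  (∀ (d : Bool) (e f : Bool × ℕ), M.mrel d e f →
    ((∃ a, M.label e = some a ∧ S.write e.1 (S.prevLoc ρ e) a d (val d e f) (ρ e)) ∧
     (∃ b, M.label f = some b ∧ S.read f.1 (S.prevLoc ρ f) b d (val d e f) (ρ f)))) ∧
  (fun p => S.lastLoc M ρ p) ∈ S.finals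

theorem good_of_accepts (S : CPDS archQQ (Fin 3)) (M : PreCBM archQQ (Fin 3))
    (h : S.AcceptsPre M) : ∃ ρ val, Good S M ρ val := by
  obtain ⟨ρ, ⟨h1, h2⟩, h3⟩ := h
  have : ∀ (d : Bool) (e f : Bool × ℕ), ∃ v, M.mrel d e f →
    ((∃ a, M.label e = some a ∧ S.write e.1 (S.prevLoc ρ e) a d v (ρ e)) ∧
     (∃ b, M.label f = some b ∧ S.read f.1 (S.prevLoc ρ f) b d v (ρ f))) := by
    intro d e f
    by_cases h : M.mrel d e f
    · obtain ⟨v, a, b, ha, hb, hw, hr⟩ := h2 d e f h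
      exact ⟨v, fun _ => ⟨⟨a, ha, hw⟩, ⟨b, hb, hr⟩⟩⟩
    · exact ⟨S.valNonempty.some, fun h' => absurd h' h⟩
  choose val hval using this
  exact ⟨ρ, val, h1, hval, h3⟩

theorem good_mix (S : CPDS archQQ (Fin 3)) (n P : ℕ) (hP : 1 ≤ P) (w w' : ℕ → Fin 3)
    (ρ ρ' : Bool × ℕ → S.Locs) (val val' : Bool → Bool × ℕ → Bool × ℕ → S.Val)
    (h : Good S (Mk n (4 * P) w) ρ val) (h' : Good S (Mk n (4 * P) w') ρ' val')
    (hloc : ∀ p : Bool, ρ (p, 2 * P) = ρ' (p, 2 * P))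
    (hval : ∀ j < n, val true (true, 2 * P - 2 * j) (false, 2 * P - 2 * j + 2 * n - 1) =
      val' true (true, 2 * P - 2 * j) (false, 2 * P - 2 * j + 2 * n - 1)) :
    S.AcceptsPre (Mk n (4 * P) (mix P w w')) := by
  obtain ⟨i1, m1, f1⟩ := h
  obtain ⟨i2, m2, f2⟩ := h'
  let σ : Bool × ℕ → S.Locs := fun e => if e.2 ≤ 2 * P then ρ e else ρ' e
  have sl : ∀ e : Bool × ℕ, e.2 ≤ 2 * P → σ e = ρ e := fun e h => by simp [σ, h]
  have sr : ∀ e : Bool × ℕ, ¬ e.2 ≤ 2 * P → σ e = ρ' e := fun e h => by simp only [σ, h, if_false]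
  have pl : ∀ e : Bool × ℕ, e.2 ≤ 2 * P → S.prevLoc σ e = S.prevLoc ρ e := by
    intro e h
    unfold CPDS.prevLoc
    split
    · rfl
    · exact sl _ (by simp only; omega)
  have pr : ∀ e : Bool × ℕ, ¬ e.2 ≤ 2 * P → S.prevLoc σ e = S.prevLoc ρ' e := by
    intro e h
    unfold CPDS.prevLoc
    split
    · rfl
    · by_cases h2 : e.2 - 1 ≤ 2 * P
      · have h3 : e.2 - 1 = 2 * P := by omega
        rw [h3]
        exact (sl _ (by simp)).trans (hloc e.1)
      · exact sr _ h2
  have ll : ∀ e : Bool × ℕ, 1 ≤ e.2 → e.2 ≤ 4 * P → e.2 ≤ 2 * P →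
      (Mk n (4 * P) (mix P w w')).label e = (Mk n (4 * P) w).label e := by
    rintro ⟨p, i⟩ h1 h2 h3
    rw [mk_label _ _ _ _ h1 h2, mk_label _ _ _ _ h1 h2]
    simp only at h3
    simp [mix, h3]
  have lr : ∀ e : Bool × ℕ, 1 ≤ e.2 → e.2 ≤ 4 * P → ¬ e.2 ≤ 2 * P →
      (Mk n (4 * P) (mix P w w')).label e = (Mk n (4 * P) w').label e := by
    rintro ⟨p, i⟩ h1 h2 h3
    rw [mk_label _ _ _ _ h1 h2, mk_label _ _ _ _ h1 h2]
    simp only at h3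
    simp only [mix, h3, if_false]
  refine ⟨σ, ⟨?_, ?_⟩, ?_⟩
  · intro e he hi
    have he' := (mk_isEvent ..).1 he
    by_cases hl : e.2 ≤ 2 * P
    · rw [ll e he'.1 he'.2 hl, sl e hl, pl e hl]
      exact i1 e ((mk_isEvent ..).2 he') hi
    · rw [lr e he'.1 he'.2 hl, sr e hl, pr e hl]
      exact i2 e ((mk_isEvent ..).2 he') hi
  · rintro (d : Bool) (e : Bool × ℕ) (f : Bool × ℕ) hm
    obtain ⟨⟨a, a1, a2⟩, ⟨b, b1, b2⟩⟩ := m1 d e f hm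
    obtain ⟨⟨a', a1', a2'⟩, ⟨b', b1', b2'⟩⟩ := m2 d e f hm
    obtain ⟨g1, g2, g3, g4, g5, g6⟩ := hm
    by_cases hl : e.2 ≤ 2 * P
    · rw [ll e g4.1 g4.2 hl, sl e hl, pl e hl]
      by_cases hr : f.2 ≤ 2 * P
      · rw [ll f g5.1 g5.2 hr, sl f hr, pl f hr]
        exact ⟨_, a, b, a1, b1, a2, b2⟩
      · rw [lr f g5.1 g5.2 hr, sr f hr, pr f hr]
        refine ⟨_, a, b', a1, b1', a2, ?_⟩
        have : val d e f = val' d e f := by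
          obtain ⟨p, i⟩ := e
          obtain ⟨q, j⟩ := f
          simp only at g1 g2 g3 g4 g5 g6 hl hr
          subst g1 g2
          cases p with
          | false => simp at g6; omega
          | true =>
            simp at g6
            have := hval ((2 * P - i) / 2) (by omega)
            have e1 : 2 * P - 2 * ((2 * P - i) / 2) = i := by omega
            rw [e1] at this
            have e2 : i + 2 * n - 1 = j := by omega
            rw [e2] at this
            exact this
        rw [this]; exact b2'
    · have hr : ¬ f.2 ≤ 2 * P := by
        split at g6 <;> omega
      rw [lr e g4.1 g4.2 hl, sr e hl, pr e hl, lr f g5.1 g5.2 hr, sr f hr, pr f hr]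
      exact ⟨_, a', b', a1', b1', a2', b2'⟩
  · convert f2 using 1
    funext p
    have hlen : ∀ w, ((Mk n (4 * P) w).word p).length = 4 * P := by intro w; simp [Mk]
    unfold CPDS.lastLoc
    rw [hlen, hlen]
    split
    · rfl
    · exact sr _ (by simp only; omega)

end MsoNot

open MsoNot in
/-- Over the architecture with two processes connected by two
queues (one in each direction) and a three-letter alphabet, there is an MSO
sentence whose language is the language of no CPDS. -/
theorem mso_sentence_not_cpds_definable :
    ∃ φ : GMSO (Fin 3 ⊕ archQQ.Procs) (Option archQQ.DS),
      GMSO.Closed φ ∧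
      ∀ S : CPDS archQQ (Fin 3), S.lang ≠ msoLang archQQ (Fin 3) φ := by
  refine ⟨phi, phi_closed, fun S hS => ?_⟩
  haveI := S.locsFintype
  haveI := S.valFintype
  haveI := S.locsNonempty
  haveI := S.valNonempty
  obtain ⟨k, hkL, hkV⟩ : ∃ k, Fintype.card S.Locs ≤ 2 ^ k ∧ Fintype.card S.Val ≤ 2 ^ k :=
    ⟨Fintype.card S.Locs + Fintype.card S.Val,
      (Nat.lt_two_pow_self.le).trans (Nat.pow_le_pow_right (by norm_num) (by omega)),
      (Nat.lt_two_pow_self.le).trans (Nat.pow_le_pow_right (by norm_num) (by omega))⟩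
  obtain ⟨n, hnk⟩ : ∃ n, n = k + 2 := ⟨_, rfl⟩
  have hn : 2 ≤ n := by omega
  have key : ∀ w, S.AcceptsPre (Mk n (4 * (n * (n + 1))) w) ↔
      (Mk n (4 * (n * (n + 1))) w).MsoSat phi := by
    intro w
    have := Set.ext_iff.1 hS ⟨Mk n (4 * (n * (n + 1))) w, mk_isCBM _ _ _ hn⟩
    exact this
  have hPos : 0 < n * (n + 1) := by positivity
  have hno := not_mem_phi n hn
  have hyes := mem_phi n (4 * (n * (n + 1)))
  have hcard : (2 ^ k) ^ 2 * (2 ^ k) ^ n < 2 ^ (n * (n + 1)) := by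
    rw [← pow_mul, ← pow_mul, ← pow_add]
    apply Nat.pow_lt_pow_right (by norm_num)
    subst hnk; nlinarith
  generalize n * (n + 1) = P at *
  let ext : (Fin P → Bool) → ℕ → Bool := fun u i => u ⟨i % P, Nat.mod_lt _ hPos⟩
  have hg : ∀ u : Fin P → Bool, ∃ ρ val, Good S (Mk n (4 * P) (wd P (ext u))) ρ val :=
    fun u => good_of_accepts _ _ ((key _).2 (hyes _))
  choose ρ val hgood using hg
  let sig : (Fin P → Bool) → (Bool → S.Locs) × (Fin n → S.Val) := fun u =>
    (fun p => ρ u (p, 2 * P), fun j =>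
      val u true (true, 2 * P - 2 * j.1) (false, 2 * P - 2 * j.1 + 2 * n - 1))
  obtain ⟨u, v, huv, hsig⟩ := Fintype.exists_ne_map_eq_of_card_lt sig (by
    simp only [Fintype.card_prod, Fintype.card_fun, Fintype.card_bool, Fintype.card_fin]
    refine lt_of_le_of_lt ?_ hcard
    gcongr)
  have main : ∀ u v : Fin P → Bool, sig u = sig v → ∀ r, u r = false → v r = true → False := by
    intro u v hs r hu hv
    have h1 := congrArg Prod.fst hs
    have h2 := congrArg Prod.snd hs
    have := good_mix S n P hPos _ _ _ _ _ _ (hgood u) (hgood v) (fun p => congrFun h1 p)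
      (fun j hj => congrFun h2 ⟨j, hj⟩)
    refine hno (ext u) (ext v) r.1 r.2 ?_ ?_ ((key _).1 this)
    · simp only [ext, Nat.mod_eq_of_lt r.2]; exact hu
    · simp only [ext, Nat.mod_eq_of_lt r.2]; exact hv
  obtain ⟨r, hr⟩ := Function.ne_iff.1 huv
  cases hu : u r <;> cases hv : v r
  · exact hr (hu.trans hv.symm)
  · exact main u v hsig r hu hv
  · exact main v u hsig.symm r hv hu
  · exact hr (hu.trans hv.symm)
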